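/- Let a₁, a₂, a₃ ∈ ℝ³ be not collinear (a₁ − a₂ and a₁ − a₃ linearly independent), let 𝔾 ∈ ℝ^{9×6} be the stacked matrix [G(a₁); G(a₂); G(a₃)], and suppose ξ ∈ ℝ⁶ satisfies vⱼ = G(aⱼ)ξ for j = 1, 2, 3. Then 𝔾ᵀ𝔾 is invertible and ξ = (𝔾ᵀ𝔾)⁻¹ 𝔾ᵀ 𝕍, where 𝕍 ∈ ℝ⁹ is the stacked vector of v₁, v₂, v₃; that is, the rigid-body velocities ξ are uniquely determined from the velocities of three non-collinear feature points by the pseudo-inverse formula. -/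

import Mathlib

open Matrix

noncomputable section

/-- The skew-symmetric matrix `x^×` with `x^× y = x × y`. -/
def skew (x : Fin 3 → ℝ) : Matrix (Fin 3) (Fin 3) ℝ :=
  !![0, -x 2, x 1; x 2, 0, -x 0; -x 1, x 0, 0]

/-- The inverse `vex` of the map `x ↦ x^×` on skew-symmetric matrices. -/
def vex (A : Matrix (Fin 3) (Fin 3) ℝ) : Fin 3 → ℝ :=
  ![A 2 1, A 0 2, A 1 0]

/-- For `ξ = (Ω, ν) ∈ ℝ⁶`, the 4×4 matrix `ξ^∨ = [[Ω^×, ν],[0,0]]`. -/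
def hat4 (Ω ν : Fin 3 → ℝ) : Matrix (Fin 3 ⊕ Fin 1) (Fin 3 ⊕ Fin 1) ℝ :=
  Matrix.fromBlocks (skew Ω) (Matrix.of fun i _ => ν i) 0 0

/-- The 4×4 pose matrix `[[R, b],[0,1]]`. -/
def pose (R : Matrix (Fin 3) (Fin 3) ℝ) (b : Fin 3 → ℝ) :
    Matrix (Fin 3 ⊕ Fin 1) (Fin 3 ⊕ Fin 1) ℝ :=
  Matrix.fromBlocks R (Matrix.of fun i _ => b i) 0 1

/-- The adjoint matrix `Ad_g = [[R, 0],[b^× R, R]]` for `g = [[R,b],[0,1]]`. -/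
def AdMat (R : Matrix (Fin 3) (Fin 3) ℝ) (b : Fin 3 → ℝ) :
    Matrix (Fin 3 ⊕ Fin 3) (Fin 3 ⊕ Fin 3) ℝ :=
  Matrix.fromBlocks R 0 (skew b * R) R

/-- The 6×6 matrix `ad_ζ = [[w^×, 0],[v^×, w^×]]` for `ζ = (w, v)`. -/
def adMat (w v : Fin 3 → ℝ) : Matrix (Fin 3 ⊕ Fin 3) (Fin 3 ⊕ Fin 3) ℝ :=
  Matrix.fromBlocks (skew w) 0 (skew v) (skew w)

/-- The 3×6 matrix `G(a) = [a^× −I]`. -/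
def Gmat (a : Fin 3 → ℝ) : Matrix (Fin 3) (Fin 3 ⊕ Fin 3) ℝ :=
  Matrix.of fun i => Sum.elim (fun j => skew a i j) (fun j => (-(1 : Matrix (Fin 3) (Fin 3) ℝ)) i j)

/-- The stacked 9×6 matrix `𝔾 = [G(a₁); G(a₂); G(a₃)]`. -/
def stack3 (a₁ a₂ a₃ : Fin 3 → ℝ) :
    Matrix (Fin 3 ⊕ (Fin 3 ⊕ Fin 3)) (Fin 3 ⊕ Fin 3) ℝ :=
  Matrix.of (Sum.elim (fun r => Gmat a₁ r)
    (Sum.elim (fun r => Gmat a₂ r) (fun r => Gmat a₃ r)))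

/-!
By `G(a) (Ω, ν) = a × Ω - ν`, a vector `(Ω, ν)` in the kernel of `𝔾` satisfies
`(aᵢ - aⱼ) × Ω = 0` for all `i`, `j`. Hence `Ω` is parallel to two independent vectors, so `Ω = 0`,
and then `ν = 0`. A real matrix with trivial kernel has a positive definite Gram matrix, so `𝔾ᵀ𝔾`
is invertible and the normal equations `𝔾ᵀ𝔾 ξ = 𝔾ᵀ𝕍` determine `ξ`.
-/

theorem exists_smul_eq_of_cross_eq_zero {K : Type*} [Field K] {v w : Fin 3 → K} (hv : v ≠ 0)
    (hvw : v ⨯₃ w = 0) : ∃ c : K, c • v = w := by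
  by_contra! hne
  exact crossProduct_ne_zero_iff_linearIndependent.mpr
    ((LinearIndependent.pair_iff' hv).mpr hne) hvw

theorem eq_zero_of_cross_eq_zero {K : Type*} [Field K] {p q w : Fin 3 → K}
    (hpq : LinearIndependent K ![p, q]) (hp : w ⨯₃ p = 0) (hq : w ⨯₃ q = 0) : w = 0 := by
  by_contra hw
  obtain ⟨c, rfl⟩ := exists_smul_eq_of_cross_eq_zero hw hp
  obtain ⟨d, rfl⟩ := exists_smul_eq_of_cross_eq_zero hw hq
  refine crossProduct_ne_zero_iff_linearIndependent.mpr hpq ?_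
  rw [map_smul, LinearMap.map_smul₂, cross_self, smul_zero, smul_zero]

theorem isUnit_transpose_mul_self_of_mulVec_injective {K m n : Type*} [Field K] [PartialOrder K]
    [StarRing K] [StarOrderedRing K] [TrivialStar K] [Fintype m] [Fintype n] [DecidableEq n]
    {A : Matrix m n K} (hA : Function.Injective A.mulVec) : IsUnit (Aᵀ * A) := by
  simpa only [conjTranspose_eq_transpose_of_trivial] using
    (PosDef.conjTranspose_mul_self A hA).isUnit

theorem inv_mul_mulVec_mulVec_mulVec {R m n : Type*} [CommRing R] [Fintype m] [Fintype n]
    [DecidableEq n] {B : Matrix n m R} {A : Matrix m n R} (hBA : IsUnit (B * A)) (x : n → R) :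
    (B * A)⁻¹ *ᵥ (B *ᵥ (A *ᵥ x)) = x := by
  have := hBA.invertible
  exact inv_mulVec_eq_vec (mulVec_mulVec x B A)

theorem skew_mulVec (x y : Fin 3 → ℝ) : skew x *ᵥ y = x ⨯₃ y := by
  ext i
  fin_cases i <;> simp [skew, vecHead, vecTail, cross_apply, neg_add_eq_sub, ← sub_eq_add_neg]

theorem Gmat_eq_fromCols (a : Fin 3 → ℝ) : Gmat a = fromCols (skew a) (-1) := rfl

theorem Gmat_mulVec (a Ω ν : Fin 3 → ℝ) : Gmat a *ᵥ Sum.elim Ω ν = a ⨯₃ Ω - ν := by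
  rw [Gmat_eq_fromCols, fromCols_mulVec_sumElim, skew_mulVec, neg_mulVec, one_mulVec,
    sub_eq_add_neg]

theorem cross_sub_eq_zero_of_Gmat_mulVec_eq {a b Ω ν : Fin 3 → ℝ}
    (h : Gmat a *ᵥ Sum.elim Ω ν = Gmat b *ᵥ Sum.elim Ω ν) : Ω ⨯₃ (a - b) = 0 := by
  rw [Gmat_mulVec, Gmat_mulVec, sub_left_inj] at h
  rw [map_sub, ← cross_anticomm a, ← cross_anticomm b, h, sub_self]

theorem eq_zero_of_Gmat_mulVec_eq_zero {a₁ a₂ a₃ : Fin 3 → ℝ}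
    (hind : LinearIndependent ℝ ![a₁ - a₂, a₁ - a₃]) {ξ : Fin 3 ⊕ Fin 3 → ℝ}
    (h₁ : Gmat a₁ *ᵥ ξ = 0) (h₂ : Gmat a₂ *ᵥ ξ = 0) (h₃ : Gmat a₃ *ᵥ ξ = 0) : ξ = 0 := by
  obtain ⟨Ω, ν, rfl⟩ : ∃ Ω ν, ξ = Sum.elim Ω ν := ⟨_, _, (Sum.elim_comp_inl_inr ξ).symm⟩
  obtain rfl : Ω = 0 := eq_zero_of_cross_eq_zero hind
    (cross_sub_eq_zero_of_Gmat_mulVec_eq (h₁.trans h₂.symm))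
    (cross_sub_eq_zero_of_Gmat_mulVec_eq (h₁.trans h₃.symm))
  obtain rfl : ν = 0 := by simpa only [Gmat_mulVec, map_zero, zero_sub, neg_eq_zero] using h₁
  exact Sum.elim_zero_zero

theorem stack3_eq_fromRows (a₁ a₂ a₃ : Fin 3 → ℝ) :
    stack3 a₁ a₂ a₃ = fromRows (Gmat a₁) (fromRows (Gmat a₂) (Gmat a₃)) := rfl

theorem stack3_mulVec (a₁ a₂ a₃ : Fin 3 → ℝ) (ξ : Fin 3 ⊕ Fin 3 → ℝ) :
    stack3 a₁ a₂ a₃ *ᵥ ξ = Sum.elim (Gmat a₁ *ᵥ ξ) (Sum.elim (Gmat a₂ *ᵥ ξ) (Gmat a₃ *ᵥ ξ)) := by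
  rw [stack3_eq_fromRows, fromRows_mulVec, fromRows_mulVec]

theorem stack3_mulVec_injective {a₁ a₂ a₃ : Fin 3 → ℝ}
    (hind : LinearIndependent ℝ ![a₁ - a₂, a₁ - a₃]) :
    Function.Injective (stack3 a₁ a₂ a₃).mulVec := by
  refine (injective_iff_map_eq_zero (stack3 a₁ a₂ a₃).mulVecLin).mpr fun ξ hξ => ?_
  rw [mulVecLin_apply, stack3_mulVec, ← Sum.elim_zero_zero, ← Sum.elim_zero_zero,
    Sum.elim_eq_iff, Sum.elim_eq_iff] at hξ
  obtain ⟨h₁, h₂, h₃⟩ := hξ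
  exact eq_zero_of_Gmat_mulVec_eq_zero hind h₁ h₂ h₃

/-- with three non-collinear feature points, `𝔾ᵀ𝔾` is invertible and the
rigid-body velocities are recovered by the pseudo-inverse formula
`ξ = (𝔾ᵀ𝔾)⁻¹ 𝔾ᵀ 𝕍`. -/
theorem pseudo_inverse_velocity (a₁ a₂ a₃ : Fin 3 → ℝ)
    (hind : LinearIndependent ℝ ![a₁ - a₂, a₁ - a₃])
    (ξ : Fin 3 ⊕ Fin 3 → ℝ) (v₁ v₂ v₃ : Fin 3 → ℝ)
    (hv₁ : v₁ = Gmat a₁ *ᵥ ξ) (hv₂ : v₂ = Gmat a₂ *ᵥ ξ) (hv₃ : v₃ = Gmat a₃ *ᵥ ξ) :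
    IsUnit ((stack3 a₁ a₂ a₃)ᵀ * stack3 a₁ a₂ a₃) ∧
      ξ = ((stack3 a₁ a₂ a₃)ᵀ * stack3 a₁ a₂ a₃)⁻¹ *ᵥ
        ((stack3 a₁ a₂ a₃)ᵀ *ᵥ Sum.elim v₁ (Sum.elim v₂ v₃)) := by
  have hunit := isUnit_transpose_mul_self_of_mulVec_injective (stack3_mulVec_injective hind)
  refine ⟨hunit, ?_⟩
  rw [hv₁, hv₂, hv₃, ← stack3_mulVec, inv_mul_mulVec_mulVec_mulVec hunit]
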